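/- arXiv:1606.02767 — 3 statements merged into one kernel-verified Lean document; each statement's English description precedes it below -/
import Mathlib

section
/- Let Γ be an alphabet with a distinguished blank symbol (blank = default) and T : Turing.Tape Γ. For symbols w₁, w₂ : Γ, the tape obtained by writing w₁ and moving right equals the tape obtained by writing w₂ with no move, i.e. Tape.move Turing.Dir.right (T.write w₁) = T.write w₂, if and only if w₁ = default, w₂ = default, the left half-tape of T is entirely blank (T.left = default), and the right half-tape of T is entirely blank (T.right = default). -/
/-!
Moving right from `T.write w₁` conses `w₁` onto the left half-tape and removes the first symbol of
the right one, so the result is `T.write w₂` exactly when the left half-tape is unchanged by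
consing `w₁` and the right half-tape is unchanged by consing `w₂`. A sequence unchanged by consing
`a` is constantly `a`, and a constant sequence that is eventually blank is blank.
-/

section

open Turing Filter

variable {Γ : Type*} [Inhabited Γ]

theorem listBlank_eventually_nth_eq_default (l : ListBlank Γ) :
    ∀ᶠ n in atTop, l.nth n = default := by
  induction l using ListBlank.induction_on with
  | h s => exact eventually_atTop.2 ⟨s.length, fun _ ↦ List.getI_eq_default s⟩

theorem listBlank_nth_default (n : ℕ) : (default : ListBlank Γ).nth n = default :=
  List.getI_nil n

theorem listBlank_eq_default_of_forall_nth_eq {l : ListBlank Γ} {a : Γ} (h : ∀ n, l.nth n = a) :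
    a = default ∧ l = default := by
  obtain ⟨n, hn⟩ := (listBlank_eventually_nth_eq_default l).exists
  have ha : a = default := (h n).symm.trans hn
  exact ⟨ha, ListBlank.ext fun i ↦ by rw [h, ha, listBlank_nth_default]⟩

theorem listBlank_nth_eq_of_cons_eq_self {l : ListBlank Γ} {a : Γ} (h : l.cons a = l) (n : ℕ) :
    l.nth n = a := by
  induction n with
  | zero => rw [← h, ListBlank.nth_zero, ListBlank.head_cons]
  | succ n ih => rw [← h, ListBlank.nth_succ, ListBlank.tail_cons, ih]

theorem listBlank_cons_default_default : (default : ListBlank Γ).cons default = default :=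
  ListBlank.cons_head_tail default

theorem listBlank_cons_eq_self_iff {l : ListBlank Γ} {a : Γ} :
    l.cons a = l ↔ a = default ∧ l = default := by
  constructor
  · exact fun h ↦ listBlank_eq_default_of_forall_nth_eq (listBlank_nth_eq_of_cons_eq_self h)
  · rintro ⟨rfl, rfl⟩
    exact listBlank_cons_default_default

theorem listBlank_cons_eq_iff {l m : ListBlank Γ} {a : Γ} :
    l.cons a = m ↔ m.head = a ∧ m.tail = l := by
  constructor
  · rintro rfl
    exact ⟨ListBlank.head_cons a l, ListBlank.tail_cons a l⟩
  · rintro ⟨rfl, rfl⟩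
    exact ListBlank.cons_head_tail m

theorem tape_move_right_eq_iff {S T : Tape Γ} :
    T.move Dir.right = S ↔ T.left₀ = S.left ∧ S.right₀ = T.right := by
  obtain ⟨a, L, R⟩ := T
  obtain ⟨b, L', R'⟩ := S
  simp only [Tape.move, Tape.left₀, Tape.right₀, Tape.mk.injEq, listBlank_cons_eq_iff (l := R')]
  exact and_left_comm

end

/-- The "stay versus right-move" case in the proof of the paper's Lemma 1:
writing `w₁` and moving right gives the same tape as writing `w₂` without moving
iff both written symbols are blank and both half-tapes of `T` are entirely blank. -/
theorem write_move_right_eq_write_iff {Γ : Type*} [Inhabited Γ] (T : Turing.Tape Γ)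
    (w₁ w₂ : Γ) :
    Turing.Tape.move Turing.Dir.right (T.write w₁) = T.write w₂ ↔
      w₁ = default ∧ w₂ = default ∧ T.left = default ∧ T.right = default := by
  calc Turing.Tape.move Turing.Dir.right (T.write w₁) = T.write w₂
    _ ↔ T.left.cons w₁ = T.left ∧ T.right.cons w₂ = T.right := tape_move_right_eq_iff
    _ ↔ (w₁ = default ∧ T.left = default) ∧ w₂ = default ∧ T.right = default :=
      and_congr listBlank_cons_eq_self_iff listBlank_cons_eq_self_iff
    _ ↔ w₁ = default ∧ w₂ = default ∧ T.left = default ∧ T.right = default := by tauto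
end

section
/- Let Γ be an alphabet with a distinguished blank symbol (blank = default) and Q a type of states. For a machine M : Q → Γ → Option (Q × Γ × (Option Turing.Dir)) define the step function on configurations (q, T) : Q × Turing.Tape Γ by: if M q T.head = none the machine halts, and if M q T.head = some (q', w, d) the next configuration is (q', Tape.move d (T.write w)) when d = some direction and (q', T.write w) when d = none (stay). Let M₁ and M₂ be two such machines, let c₀ be an initial configuration, and suppose both machines, started from c₀, produce the identical finite sequence of configurations c₀, c₁, …, cₙ and both halt at cₙ. Suppose further that at no step i < n the trivial blank case holds (i.e. it is not the case that the tape of cᵢ has entirely blank left and right half-tapes and the rule applied writes a blank symbol), and that every pair (q, s) on which M₁ or M₂ is defined (≠ none) actually occurs as (state, head symbol) of some cᵢ with i < n. Then M₁ = M₂. -/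
/-!
If two rules send the same configuration to the same successor but move the head differently, then
comparing the half-tapes of the two results shows that each original half-tape is unchanged by
dropping its first symbol (a move against a stay) or its first two symbols (left against right).
A half-tape is eventually blank, so dropping symbols takes it to the blank half-tape after finitely
many steps, and the blank half-tape is therefore the only periodic point of `ListBlank.tail`. Thus
the tape is blank and both rules write the blank: the trivial case. Otherwise the moves agree, and
undoing the move reveals the written symbol.
-/

/-- Apply an optional move direction to a tape: `none` means "stay" (no move). -/
def moveOpt {Γ : Type*} [Inhabited Γ] (d : Option Turing.Dir) (T : Turing.Tape Γ) :
    Turing.Tape Γ :=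
  match d with
  | none => T
  | some d => Turing.Tape.move d T

/-- One step of a machine `M : Q → Γ → Option (Q × Γ × Option Turing.Dir)` on a
configuration (state, tape): `none` means the machine halts. -/
def step {Q Γ : Type*} [Inhabited Γ] (M : Q → Γ → Option (Q × Γ × Option Turing.Dir))
    (c : Q × Turing.Tape Γ) : Option (Q × Turing.Tape Γ) :=
  match M c.1 c.2.head with
  | none => none
  | some (q', w, d) => some (q', moveOpt d (c.2.write w))

section

open Function Turing

variable {Q Γ : Type*} [Inhabited Γ]

theorem listBlank_cons_eq_iff_s7 {a : Γ} {L L' : ListBlank Γ} :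
    L.cons a = L' ↔ a = L'.head ∧ L = L'.tail := by
  constructor
  · rintro rfl
    simp
  · rintro ⟨rfl, rfl⟩
    exact L'.cons_head_tail

theorem exists_iterate_tail_eq_default (L : ListBlank Γ) :
    ∃ n, ListBlank.tail^[n] L = default := by
  refine L.induction_on fun l => ?_
  induction l with
  | nil => exact ⟨0, rfl⟩
  | cons a l ih =>
    obtain ⟨n, hn⟩ := ih
    exact ⟨n + 1, by rwa [iterate_succ_apply]⟩

theorem eq_default_of_isPeriodicPt_tail {L : ListBlank Γ} {p : ℕ} (hp : 0 < p)
    (hL : IsPeriodicPt ListBlank.tail p L) : L = default := by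
  obtain ⟨n, hn⟩ := exists_iterate_tail_eq_default L
  have hdefault : IsFixedPt ListBlank.tail^[n] (default : ListBlank Γ) := iterate_fixed rfl n
  exact (hL.iterate n).eq_of_apply_eq (hdefault.isPeriodicPt 1) hp one_pos (hn.trans hdefault.symm)

theorem tape_write_eq_default_iff {T : Tape Γ} {w : Γ} :
    T.write w = default ↔ T.left = default ∧ T.right = default ∧ w = default := by
  change Tape.mk w T.left T.right = ⟨default, default, default⟩ ↔ _
  rw [Tape.mk.injEq]
  tauto

theorem write_eq_default_of_move_write_eq_write {T : Tape Γ} {w₁ w₂ : Γ} {d : Dir}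
    (h : (T.write w₁).move d = T.write w₂) : T.write w₁ = default ∧ T.write w₂ = default := by
  obtain ⟨_, L, R⟩ := T
  cases d with
  | left =>
    obtain ⟨hw₂, hL, hR⟩ := Tape.mk.inj h
    obtain ⟨hw₁, hR⟩ := listBlank_cons_eq_iff_s7.1 hR
    obtain rfl := eq_default_of_isPeriodicPt_tail one_pos hL
    obtain rfl := eq_default_of_isPeriodicPt_tail one_pos hR.symm
    exact ⟨tape_write_eq_default_iff.2 ⟨rfl, rfl, hw₁⟩,
      tape_write_eq_default_iff.2 ⟨rfl, rfl, hw₂.symm⟩⟩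
  | right =>
    obtain ⟨hw₂, hL, hR⟩ := Tape.mk.inj h
    obtain ⟨hw₁, hL⟩ := listBlank_cons_eq_iff_s7.1 hL
    obtain rfl := eq_default_of_isPeriodicPt_tail one_pos hL.symm
    obtain rfl := eq_default_of_isPeriodicPt_tail one_pos hR
    exact ⟨tape_write_eq_default_iff.2 ⟨rfl, rfl, hw₁⟩,
      tape_write_eq_default_iff.2 ⟨rfl, rfl, hw₂.symm⟩⟩

theorem write_eq_default_of_move_left_write_eq_move_right_write {T : Tape Γ} {w₁ w₂ : Γ}
    (h : (T.write w₁).move .left = (T.write w₂).move .right) :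
    T.write w₁ = default ∧ T.write w₂ = default := by
  obtain ⟨_, L, R⟩ := T
  obtain ⟨-, hL, hR⟩ := Tape.mk.inj h
  obtain ⟨hw₁, hR⟩ := listBlank_cons_eq_iff_s7.1 hR
  obtain ⟨hw₂, hL⟩ := listBlank_cons_eq_iff_s7.1 hL.symm
  obtain rfl := eq_default_of_isPeriodicPt_tail two_pos hL.symm
  obtain rfl := eq_default_of_isPeriodicPt_tail two_pos hR.symm
  exact ⟨tape_write_eq_default_iff.2 ⟨rfl, rfl, hw₁⟩, tape_write_eq_default_iff.2 ⟨rfl, rfl, hw₂⟩⟩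

theorem moveOpt_injective (d : Option Dir) : Injective (moveOpt (Γ := Γ) d) :=
  match d with
  | none => injective_id
  | some .left => LeftInverse.injective Tape.move_left_right
  | some .right => LeftInverse.injective Tape.move_right_left

theorem eq_and_eq_of_moveOpt_write_eq {T : Tape Γ} {w₁ w₂ : Γ} {d₁ d₂ : Option Dir}
    (hw₁ : T.write w₁ ≠ default) (h : moveOpt d₁ (T.write w₁) = moveOpt d₂ (T.write w₂)) :
    w₁ = w₂ ∧ d₁ = d₂ := by
  have hd : d₁ = d₂ := by
    by_contra hne
    apply hw₁
    match d₁, d₂, hne, h with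
    | none, some _, _, h => exact (write_eq_default_of_move_write_eq_write h.symm).2
    | some _, none, _, h => exact (write_eq_default_of_move_write_eq_write h).1
    | some .left, some .right, _, h =>
      exact (write_eq_default_of_move_left_write_eq_move_right_write h).1
    | some .right, some .left, _, h =>
      exact (write_eq_default_of_move_left_write_eq_move_right_write h.symm).2
  subst hd
  exact ⟨congrArg Tape.head (moveOpt_injective d₁ h), rfl⟩

theorem rule_eq_of_step_eq {M₁ M₂ : Q → Γ → Option (Q × Γ × Option Dir)}
    {x : Q × Tape Γ} (hstep : step M₁ x = step M₂ x)
    (hnontriv : ∀ q' w d, M₁ x.1 x.2.head = some (q', w, d) → x.2.write w ≠ default) :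
    M₁ x.1 x.2.head = M₂ x.1 x.2.head := by
  rcases e₁ : M₁ x.1 x.2.head with _ | ⟨q₁, w₁, d₁⟩ <;>
    rcases e₂ : M₂ x.1 x.2.head with _ | ⟨q₂, w₂, d₂⟩ <;>
    simp only [step, e₁, e₂, Option.some.injEq, Prod.mk.injEq, reduceCtorEq] at hstep ⊢
  exact ⟨hstep.1, eq_and_eq_of_moveOpt_write_eq (hnontriv q₁ w₁ d₁ e₁) hstep.2⟩

theorem machine_unique_of_run_general (M₁ M₂ : Q → Γ → Option (Q × Γ × Option Dir))
    (C : Set (Q × Tape Γ))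
    (hstep : ∀ x ∈ C, step M₁ x = step M₂ x)
    (hnontriv : ∀ x ∈ C, ∀ q' w d, M₁ x.1 x.2.head = some (q', w, d) →
      ¬ (x.2.left = default ∧ x.2.right = default ∧ w = default))
    (hcover : ∀ q s, M₁ q s ≠ none ∨ M₂ q s ≠ none → ∃ x ∈ C, x.1 = q ∧ x.2.head = s) :
    M₁ = M₂ := by
  funext q s
  by_cases hdef : M₁ q s ≠ none ∨ M₂ q s ≠ none
  · obtain ⟨x, hx, rfl, rfl⟩ := hcover q s hdef
    exact rule_eq_of_step_eq (hstep x hx) fun q' w d hrule =>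
      mt tape_write_eq_default_iff.1 (hnontriv x hx q' w d hrule)
  · obtain ⟨h₁, h₂⟩ : M₁ q s = none ∧ M₂ q s = none := by simpa using hdef
    rw [h₁, h₂]

end

/-- The learning content of the paper's Theorem 1 (Universal Learning):
if two machines produce the identical finite halting run `c 0, c 1, …, c n`,
no step is in the trivial blank case, and every transition rule of either machine is
actually used during the run, then the two machines are equal. -/
theorem machine_unique_of_run {Q Γ : Type*} [Inhabited Γ]
    (M₁ M₂ : Q → Γ → Option (Q × Γ × Option Turing.Dir))
    (n : ℕ) (c : ℕ → Q × Turing.Tape Γ)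
    (hstep₁ : ∀ i < n, step M₁ (c i) = some (c (i + 1)))
    (hstep₂ : ∀ i < n, step M₂ (c i) = some (c (i + 1)))
    (hhalt₁ : step M₁ (c n) = none)
    (hhalt₂ : step M₂ (c n) = none)
    (hnontriv₁ : ∀ i < n, ∀ q' w d, M₁ (c i).1 (c i).2.head = some (q', w, d) →
      ¬ ((c i).2.left = default ∧ (c i).2.right = default ∧ w = default))
    (hnontriv₂ : ∀ i < n, ∀ q' w d, M₂ (c i).1 (c i).2.head = some (q', w, d) →
      ¬ ((c i).2.left = default ∧ (c i).2.right = default ∧ w = default))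
    (hcover : ∀ q s, M₁ q s ≠ none ∨ M₂ q s ≠ none →
      ∃ i < n, (c i).1 = q ∧ (c i).2.head = s) :
    M₁ = M₂ := by
  exact machine_unique_of_run_general M₁ M₂ (c '' Set.Iio n)
    (Set.forall_mem_image.2 fun i hi => (hstep₁ i hi).trans (hstep₂ i hi).symm)
    (Set.forall_mem_image.2 hnontriv₁) fun q s h => Set.exists_mem_image.2 (hcover q s h)
end

section
/- Let Γ be an alphabet with a distinguished blank symbol (blank = default) and Q a type of states, and consider machines M : Q → Γ → Option (Q × Γ × (Option Turing.Dir)) with the step semantics: from configuration (q, T), if M q T.head = none the machine halts, and if M q T.head = some (q', w, d) the next configuration is (q', Tape.move d (T.write w)) when d = some direction and (q', T.write w) when d = none (stay). Then there exists a single 'learning' function S from finite sequences of configurations (lists of Q × Turing.Tape Γ) to machines such that for every machine M, every initial configuration c₀ from which M halts after finitely many steps producing the configuration sequence c₀, c₁, …, cₙ, if at no step i < n the trivial blank case holds (the tape of cᵢ has entirely blank left and right half-tapes and the applied rule writes a blank), and every pair (q, s) on which M is defined occurs as the (state, head symbol) of some cᵢ with i < n, then S applied to the sequence c₀, c₁,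 …, cₙ equals M. -/
theorem eq_empty_of_forall_ne_mem_iff_sub_mem {G : Type*} [AddCommGroup G] [LinearOrder G]
    [IsOrderedAddMonoid G] {s : Set G} {a m : G} (hs : s.Finite) (hm : m ≠ 0)
    (h : ∀ i ≠ a, i ∈ s ↔ i - m ∈ s) : s = ∅ := by
  by_contra! hne
  obtain ⟨lo, hlo, hmin⟩ := Set.exists_min_image s id hs hne
  obtain ⟨hi, hhi, hmax⟩ := Set.exists_max_image s id hs hne
  have exception {i : G} (hmem : ¬(i ∈ s ↔ i - m ∈ s)) : i = a := not_imp_comm.1 (h i) hmem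
  have sub_notMem {x : G} (hx : 0 < x) : lo - x ∉ s := fun hx_mem =>
    (sub_lt_self lo hx).not_ge (hmin _ hx_mem)
  have add_notMem {x : G} (hx : 0 < x) : hi + x ∉ s := fun hx_mem =>
    (lt_add_of_pos_right hi hx).not_ge (hmax _ hx_mem)
  have lo_le_hi : lo ≤ hi := hmin hi hhi
  rcases hm.lt_or_gt with hneg | hpos
  · have hhi_eq : hi = a := exception fun e =>
      add_notMem (neg_pos.2 hneg) (by simpa only [sub_eq_add_neg] using e.1 hhi)
    have hlo_eq : lo + m = a := exception fun e =>
      sub_notMem (neg_pos.2 hneg) (by simpa [hlo] using e)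
    exact (add_lt_of_neg_right lo hneg).not_ge (lo_le_hi.trans_eq (hhi_eq.trans hlo_eq.symm))
  · have hlo_eq : lo = a := exception fun e => sub_notMem hpos (e.1 hlo)
    have hhi_eq : hi + m = a := exception fun e => add_notMem hpos (by simpa [hhi] using e)
    exact (lt_add_of_pos_right hi hpos).not_ge ((hhi_eq.trans hlo_eq.symm).trans_le lo_le_hi)

section Tape

variable {Γ : Type*} [Inhabited Γ]

theorem finite_setOf_listBlank_nth_ne_default (l : Turing.ListBlank Γ) :
    {n | l.nth n ≠ default}.Finite := by
  induction l using Turing.ListBlank.induction_on with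
  | h l =>
    refine (Set.finite_Iio l.length).subset fun n hn => ?_
    by_contra hlen
    exact hn ((Turing.ListBlank.nth_mk l n).trans (List.getI_eq_default l (not_lt.1 hlen)))

theorem finite_setOf_tape_nth_ne_default (T : Turing.Tape Γ) :
    {i | T.nth i ≠ default}.Finite := by
  refine ((((finite_setOf_listBlank_nth_ne_default T.right).image fun n : ℕ => (n + 1 : ℤ)).union
    ((finite_setOf_listBlank_nth_ne_default T.left).image Int.negSucc)).insert 0).subset ?_
  rintro ((_ | n) | n) hi
  · exact Or.inl rfl
  · exact Or.inr (Or.inl ⟨n, hi, rfl⟩)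
  · exact Or.inr (Or.inr ⟨n, hi, rfl⟩)

theorem tape_nth_injective : Function.Injective (Turing.Tape.nth : Turing.Tape Γ → ℤ → Γ) := by
  rintro ⟨a, L, R⟩ ⟨a', L', R'⟩ h
  have hhead : a = a' := congrFun h 0
  have hleft : L = L' := Turing.ListBlank.ext fun n => congrFun h (Int.negSucc n)
  have hright : R = R' := Turing.ListBlank.ext fun n => congrFun h (n + 1 : ℕ)
  rw [hhead, hleft, hright]

theorem tape_nth_default (i : ℤ) : (default : Turing.Tape Γ).nth i = default := by
  have blank (n : ℕ) : (default : Turing.ListBlank Γ).nth n = default :=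
    (Turing.ListBlank.nth_mk [] n).trans (List.getI_nil n)
  rcases i with (_ | n) | n
  exacts [rfl, blank n, blank n]

theorem tape_eq_default_of_nth_eq_nth_sub {T : Turing.Tape Γ} {a m : ℤ} (hm : m ≠ 0)
    (h : ∀ i ≠ a, T.nth i = T.nth (i - m)) : T = default := by
  have hblank : {i | T.nth i ≠ default} = ∅ :=
    eq_empty_of_forall_ne_mem_iff_sub_mem (a := a) (finite_setOf_tape_nth_ne_default T) hm
      fun i hi => by simp only [Set.mem_ofPred_eq, h i hi]
  refine tape_nth_injective (funext fun i => ?_)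
  rw [tape_nth_default]
  exact not_not.1 (Set.eq_empty_iff_forall_notMem.1 hblank i)

/-- The displacement of the head caused by an optional move. -/
def moveShift : Option Turing.Dir → ℤ
  | none => 0
  | some .left => -1
  | some .right => 1

theorem moveShift_injective : Function.Injective moveShift := by
  rintro (_ | _ | _) (_ | _ | _) h <;> first | rfl | cases h

theorem moveOpt_nth (d : Option Turing.Dir) (T : Turing.Tape Γ) (i : ℤ) :
    (moveOpt d T).nth i = T.nth (i + moveShift d) := by
  rcases d with _ | _ | _
  · exact congrArg T.nth (add_zero i).symm
  · exact Turing.Tape.move_left_nth T i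
  · exact Turing.Tape.move_right_nth T i

theorem eq_and_eq_of_moveOpt_write_eq_s8 {T : Turing.Tape Γ} {w w' : Γ} {d d' : Option Turing.Dir}
    (h : moveOpt d (T.write w) = moveOpt d' (T.write w')) (hw : T.write w ≠ default) :
    w = w' ∧ d = d' := by
  have hnth (i : ℤ) :
      (T.write w').nth i = (T.write w).nth (i - (moveShift d' - moveShift d)) := by
    have := congrArg (Turing.Tape.nth · (i - moveShift d')) h
    simp only [moveOpt_nth, sub_add_cancel] at this
    rw [← this, sub_sub_eq_add_sub, sub_add_eq_add_sub]
  have hshift : moveShift d' - moveShift d = 0 := by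
    by_contra hm
    refine hw (tape_eq_default_of_nth_eq_nth_sub (a := 0) hm fun i hi => ?_)
    rw [← hnth i, Turing.Tape.write_nth, Turing.Tape.write_nth, if_neg hi, if_neg hi]
  have hhead : w' = w := by
    simpa only [hshift, sub_zero, Turing.Tape.write_nth, if_true] using hnth 0
  exact ⟨hhead.symm, moveShift_injective (sub_eq_zero.1 hshift).symm⟩

end Tape

section Learning

variable {Q Γ : Type*}

/-- The value of a transition function where it is defined: new state, written symbol, move. -/
abbrev Rule (Q Γ : Type*) : Type _ := Q × Γ × Option Turing.Dir

variable [Inhabited Γ]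

/-- The configuration reached by executing a rule on a tape. -/
def Rule.apply (r : Rule Q Γ) (T : Turing.Tape Γ) : Q × Turing.Tape Γ :=
  (r.1, moveOpt r.2.2 (T.write r.2.1))

theorem Rule.eq_of_apply_eq {r r' : Rule Q Γ} {T : Turing.Tape Γ} (h : r.apply T = r'.apply T)
    (hr : T.write r.2.1 ≠ default) : r = r' := by
  obtain ⟨hstate, htape⟩ := Prod.ext_iff.1 h
  obtain ⟨hwrite, hmove⟩ := eq_and_eq_of_moveOpt_write_eq_s8 htape hr
  exact Prod.ext hstate (Prod.ext hwrite hmove)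

theorem step_eq_some_iff {M : Q → Γ → Option (Rule Q Γ)} {c c' : Q × Turing.Tape Γ} :
    step M c = some c' ↔ ∃ r : Rule Q Γ, M c.1 c.2.head = some r ∧ r.apply c.2 = c' := by
  unfold step
  cases M c.1 c.2.head <;> simp [Rule.apply]

/-- Given a relation `R` of observed transitions, `r` is a possible rule for the state `q` and head
symbol `s`: some transition from `(q, s)` is observed, and `r` accounts for all of them. -/
def Explains (R : Q × Turing.Tape Γ → Q × Turing.Tape Γ → Prop) (q : Q) (s : Γ)
    (r : Rule Q Γ) : Prop :=
  (∃ T c', R (q, T) c' ∧ T.head = s) ∧ ∀ T c', R (q, T) c' → T.head = s → r.apply T = c'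

open Classical in
/-- The machine learnt from a relation of observed transitions: each pair of a state and a head
symbol is assigned a rule that explains the observations, and is left undefined if there is none. -/
noncomputable def learn (R : Q × Turing.Tape Γ → Q × Turing.Tape Γ → Prop) :
    Q → Γ → Option (Rule Q Γ) :=
  fun q s => if h : ∃ r, Explains R q s r then some h.choose else none

variable {R : Q × Turing.Tape Γ → Q × Turing.Tape Γ → Prop} {M : Q → Γ → Option (Rule Q Γ)}

theorem explains_iff (hstep : ∀ c c', R c c' → step M c = some c')
    (hused : ∀ q s r, M q s = some r →
      ∃ T c', R (q, T) c' ∧ T.head = s ∧ T.write r.2.1 ≠ default)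
    {q : Q} {s : Γ} {r : Rule Q Γ} : Explains R q s r ↔ M q s = some r := by
  constructor
  · rintro ⟨⟨T₀, c₀, hR₀, rfl⟩, hr⟩
    obtain ⟨r', hM, -⟩ := step_eq_some_iff.1 (hstep _ _ hR₀)
    obtain ⟨T, c', hR, hhead, hwrite⟩ := hused _ _ _ hM
    obtain ⟨r'', hM', happly⟩ := step_eq_some_iff.1 (hstep _ _ hR)
    obtain rfl : r' = r'' := Option.some.inj (hM.symm.trans (hhead ▸ hM'))
    rw [← Rule.eq_of_apply_eq (happly.trans (hr T c' hR hhead).symm) hwrite]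
    exact hM
  · intro hM
    obtain ⟨T, c', hR, hhead, -⟩ := hused q s r hM
    refine ⟨⟨T, c', hR, hhead⟩, ?_⟩
    rintro T c' hR rfl
    obtain ⟨r', hM', happly⟩ := step_eq_some_iff.1 (hstep _ _ hR)
    obtain rfl : r = r' := Option.some.inj (hM.symm.trans hM')
    exact happly

theorem learn_eq (hstep : ∀ c c', R c c' → step M c = some c')
    (hused : ∀ q s r, M q s = some r →
      ∃ T c', R (q, T) c' ∧ T.head = s ∧ T.write r.2.1 ≠ default) :
    learn R = M := by
  funext q s
  unfold learn
  split_ifs with h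
  · exact ((explains_iff hstep hused).1 h.choose_spec).symm
  · exact (Option.eq_none_iff_forall_ne_some.2 fun r hM =>
      h ⟨r, (explains_iff hstep hused).2 hM⟩).symm

end Learning

/-- The relation between consecutive entries of a list. -/
def Consecutive {α : Type*} (L : List α) (a b : α) : Prop :=
  ∃ i, L[i]? = some a ∧ L[i + 1]? = some b

theorem consecutive_ofFn_iff {α : Type*} {n : ℕ} {c : ℕ → α} {a b : α} :
    Consecutive (List.ofFn fun i : Fin (n + 1) => c i) a b ↔
      ∃ i < n, c i = a ∧ c (i + 1) = b := by
  simp only [Consecutive, List.getElem?_ofFn, Option.dite_none_right_eq_some, Option.some.injEq]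
  constructor
  · rintro ⟨i, ⟨-, ha⟩, hi, hb⟩
    exact ⟨i, Nat.succ_lt_succ_iff.1 hi, ha, hb⟩
  · rintro ⟨i, hi, ha, hb⟩
    exact ⟨i, ⟨hi.trans n.lt_succ_self, ha⟩, Nat.succ_lt_succ hi, hb⟩

theorem universal_learning_general {Q Γ : Type*} [Inhabited Γ] :
    ∃ S : List (Q × Turing.Tape Γ) → (Q → Γ → Option (Q × Γ × Option Turing.Dir)),
      ∀ (M : Q → Γ → Option (Q × Γ × Option Turing.Dir)) (n : ℕ)
        (c : ℕ → Q × Turing.Tape Γ),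
        (∀ i < n, step M (c i) = some (c (i + 1))) →
        (∀ q s q' w d, M q s = some (q', w, d) → ∃ i < n, (c i).1 = q ∧ (c i).2.head = s ∧
          ¬ ((c i).2.left = default ∧ (c i).2.right = default ∧ w = default)) →
        S (List.ofFn fun i : Fin (n + 1) => c i) = M := by
  refine ⟨fun L => learn (Consecutive L), fun M n c hrun hused => learn_eq ?_ ?_⟩
  · intro a b hab
    obtain ⟨i, hi, rfl, rfl⟩ := consecutive_ofFn_iff.1 hab
    exact hrun i hi
  · rintro q s ⟨q', w, d⟩ hM
    obtain ⟨i, hi, rfl, hhead, hblank⟩ := hused q s q' w d hM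
    refine ⟨(c i).2, c (i + 1), consecutive_ofFn_iff.2 ⟨i, hi, rfl, rfl⟩, hhead, fun hw => ?_⟩
    exact hblank ⟨congrArg Turing.Tape.left hw, congrArg Turing.Tape.right hw,
      congrArg Turing.Tape.head hw⟩

/-- The paper's Theorem 1 (Universal Learning): there is a single learning function `S`
from finite sequences of configurations to machines that recovers every machine `M`
from the configuration sequence `c 0, c 1, …, c n` of any halting run, provided no step
is in the trivial blank case and every transition rule of `M` is used during the run. -/
theorem universal_learning {Q Γ : Type*} [Inhabited Γ] :
    ∃ S : List (Q × Turing.Tape Γ) → (Q → Γ → Option (Q × Γ × Option Turing.Dir)),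
      ∀ (M : Q → Γ → Option (Q × Γ × Option Turing.Dir)) (n : ℕ)
        (c : ℕ → Q × Turing.Tape Γ),
        (∀ i < n, step M (c i) = some (c (i + 1))) →
        step M (c n) = none →
        (∀ i < n, ∀ q' w d, M (c i).1 (c i).2.head = some (q', w, d) →
          ¬ ((c i).2.left = default ∧ (c i).2.right = default ∧ w = default)) →
        (∀ q s, M q s ≠ none → ∃ i < n, (c i).1 = q ∧ (c i).2.head = s) →
        S (List.ofFn fun i : Fin (n + 1) => c i) = M := by
  obtain ⟨S, hS⟩ := universal_learning_general (Q := Q) (Γ := Γ)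
  refine ⟨S, fun M n c hrun _ hblank hused => hS M n c hrun fun q s q' w d hM => ?_⟩
  obtain ⟨i, hi, rfl, rfl⟩ := hused q s (hM ▸ Option.some_ne_none _)
  exact ⟨i, hi, rfl, rfl, hblank i hi q' w d hM⟩
end
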